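/- arXiv:1606.08085 — 3 statements merged into one kernel-verified Lean document; each statement's English description precedes it below -/
import Mathlib

section
/- Let A be the adjacency matrix of an undirected circulant graph on N vertices with generating set S, positive weights (d_s)_{s∈S}, degree d per node and bandwidth B, let k ≥ 1 be an integer with 2kB < N, and let H_HP = (1/2^k)(I_N − A/d)^k be the HGSWT high-pass filter of order 2k. Then the representer polynomial of H_HP has 2k vanishing moments: for every polynomial p of degree at most 2k−1, the graph signal x with x_j = p(j) (j = 0,…,N−1) satisfies (H_HP x)_i = 0 for every index i with kB ≤ i ≤ N−1−kB. -/
/-- The symmetric circulant adjacency matrix of the circulant graph on `N` vertices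
with generating set `S` and weights `w`. -/
noncomputable def circAdj (N : ℕ) (S : Finset ℕ) (w : ℕ → ℝ) :
    Matrix (Fin N) (Fin N) ℝ :=
  fun i j => ∑ s ∈ S,
    if ((i : ℤ) - (j : ℤ)) % (N : ℤ) = (s : ℤ) % (N : ℤ) ∨
       ((i : ℤ) - (j : ℤ)) % (N : ℤ) = (-(s : ℤ)) % (N : ℤ)
    then w s else 0

open Polynomial in
/-- The action of the symmetric filter `I − A/d` on polynomial signals away from the border. -/
noncomputable def polyHighpass (S : Finset ℕ) (w : ℕ → ℝ) (p : ℝ[X]) : ℝ[X] :=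
  p - (∑ s ∈ S, 2 * w s)⁻¹ • ∑ s ∈ S, w s • (taylor (-(s : ℝ)) p + taylor (s : ℝ) p)

open Polynomial in
/-- A symmetric pair of translates agrees with twice the polynomial up to degree two lower. -/
lemma coeff_taylor_neg_add_taylor {p : ℝ[X]} {n m : ℕ} (hp : p.degree < (n + 2 : ℕ))
    (hm : n ≤ m) (r : ℝ) :
    (taylor (-r) p + taylor r p).coeff m = 2 * p.coeff m := by
  have hdeg : (hasseDeriv m p).natDegree ≤ 1 := by
    have h₁ := natDegree_hasseDeriv_le p m
    have h₂ : p.natDegree ≤ n + 1 :=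
      natDegree_le_iff_coeff_eq_zero.2 fun j hj => (degree_lt_iff_coeff_zero p _).1 hp j hj
    omega
  obtain ⟨a, b, hab⟩ := exists_eq_X_add_C_of_natDegree_le_one hdeg
  have h₀ : p.coeff m = b := by
    have h := taylor_coeff (0 : ℝ) p m
    rw [hab] at h
    simpa using h
  rw [coeff_add, taylor_coeff, taylor_coeff, hab, h₀]
  simp only [eval_add, eval_mul, eval_C, eval_X]
  ring

open Polynomial in
lemma degree_polyHighpass_lt {S : Finset ℕ} {w : ℕ → ℝ} (hd : ∑ s ∈ S, 2 * w s ≠ 0)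
    {p : ℝ[X]} {n : ℕ} (hp : p.degree < (n + 2 : ℕ)) : (polyHighpass S w p).degree < n := by
  rw [degree_lt_iff_coeff_zero]
  intro m hm
  have hsum : ∑ s ∈ S, w s * (2 * p.coeff m) = (∑ s ∈ S, 2 * w s) * p.coeff m := by
    rw [Finset.sum_mul]
    exact Finset.sum_congr rfl fun s _ => by ring
  simp only [polyHighpass, coeff_sub, coeff_smul, finsetSum_coeff, smul_eq_mul,
    coeff_taylor_neg_add_taylor hp hm, hsum]
  rw [inv_mul_cancel_left₀ hd, sub_self]

open Polynomial in
lemma polyHighpass_iterate_eq_zero {S : Finset ℕ} {w : ℕ → ℝ} (hd : ∑ s ∈ S, 2 * w s ≠ 0)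
    (k : ℕ) {p : ℝ[X]} (hp : p.degree < (2 * k : ℕ)) : (polyHighpass S w)^[k] p = 0 := by
  induction k generalizing p with
  | zero => simpa using hp
  | succ k ih => exact ih (degree_polyHighpass_lt hd hp)

/-- Away from the border, a row of `circAdj` sums the signal over the shifts `± s`. -/
lemma circAdj_mulVec_apply {N B : ℕ} {S : Finset ℕ} {w : ℕ → ℝ}
    (hS : ∀ s ∈ S, 1 ≤ s ∧ s ≤ B) {y : Fin N → ℝ} {f : ℤ → ℝ} {a : ℕ}
    (hy : ∀ j : Fin N, a ≤ (j : ℕ) → (j : ℕ) + a < N → y j = f (j : ℕ))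
    {i : Fin N} (hi₁ : a + B ≤ (i : ℕ)) (hi₂ : (i : ℕ) + (a + B) < N) :
    (circAdj N S w).mulVec y i =
      ∑ s ∈ S, w s * (f ((i : ℕ) - (s : ℤ)) + f ((i : ℕ) + (s : ℤ))) := by
  simp only [Matrix.mulVec, dotProduct, circAdj, Finset.sum_mul]
  rw [Finset.sum_comm]
  refine Finset.sum_congr rfl fun s hs => ?_
  obtain ⟨hs₁, hsB⟩ := hS s hs
  have hlo : (i : ℕ) - s < N := by omega
  have hhi : (i : ℕ) + s < N := by omega
  have hiff : ∀ j : Fin N,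
      (((i : ℤ) - (j : ℤ)) % (N : ℤ) = (s : ℤ) % (N : ℤ) ∨
        ((i : ℤ) - (j : ℤ)) % (N : ℤ) = (-(s : ℤ)) % (N : ℤ)) ↔
      j ∈ ({⟨(i : ℕ) - s, hlo⟩, ⟨(i : ℕ) + s, hhi⟩} : Finset (Fin N)) := by
    intro j
    have hj := j.isLt
    simp only [Finset.mem_insert, Finset.mem_singleton, Fin.ext_iff]
    refine or_congr ⟨fun h => ?_, fun h => ?_⟩ ⟨fun h => ?_, fun h => ?_⟩
    · have h0 := Int.eq_zero_of_abs_lt_dvd (Int.ModEq.dvd (Int.ModEq.symm h))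
        (abs_lt.2 ⟨by omega, by omega⟩)
      omega
    · congr 1; omega
    · have h0 := Int.eq_zero_of_abs_lt_dvd (Int.ModEq.dvd (Int.ModEq.symm h))
        (abs_lt.2 ⟨by omega, by omega⟩)
      omega
    · congr 1; omega
  simp only [hiff, ite_mul, zero_mul]
  rw [Finset.sum_ite_mem, Finset.univ_inter,
    Finset.sum_pair (by simp only [ne_eq, Fin.mk.injEq]; omega),
    hy _ (by simp only; omega) (by simp only; omega),
    hy _ (by simp only; omega) (by simp only; omega), ← mul_add]
  have hsi : s ≤ (i : ℕ) := by omega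
  push_cast [hsi]
  rfl

open Polynomial in
lemma highpass_pow_mulVec_apply {N B : ℕ} {S : Finset ℕ} {w : ℕ → ℝ}
    (hS : ∀ s ∈ S, 1 ≤ s ∧ s ≤ B) {p : ℝ[X]} {x : Fin N → ℝ}
    (hx : ∀ j : Fin N, x j = p.eval ((j : ℕ) : ℝ)) (k : ℕ) (i : Fin N)
    (hi₁ : k * B ≤ (i : ℕ)) (hi₂ : (i : ℕ) + k * B < N) :
    ((1 - (∑ s ∈ S, 2 * w s)⁻¹ • circAdj N S w) ^ k).mulVec x i =
      ((polyHighpass S w)^[k] p).eval ((i : ℕ) : ℝ) := by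
  induction k generalizing i with
  | zero => simpa using hx i
  | succ k ih =>
    rw [Nat.succ_mul] at hi₁ hi₂
    rw [pow_succ', ← Matrix.mulVec_mulVec, Matrix.sub_mulVec, Matrix.one_mulVec,
      Matrix.smul_mulVec, Pi.sub_apply, Pi.smul_apply, ih i (by omega) (by omega),
      circAdj_mulVec_apply hS (f := fun z => ((polyHighpass S w)^[k] p).eval (z : ℝ))
        (fun j h₁ h₂ => by simpa using ih j h₁ h₂) hi₁ hi₂,
      Function.iterate_succ_apply']
    generalize (polyHighpass S w)^[k] p = q
    simp [polyHighpass, eval_finsetSum, taylor_eval, sub_eq_add_neg, mul_add]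

/-- the HGSWT high-pass filter `H_HP = (1/2^k)(I − A/d)^k` has `2k`
vanishing moments: it annihilates polynomial graph signals of degree at most `2k−1`, up to
a border effect of size `kB`. -/
theorem hgswt_highpass_vanishing_moments
    (N : ℕ) (S : Finset ℕ) (w : ℕ → ℝ)
    (hS : ∀ s ∈ S, 1 ≤ s ∧ 2 * s ≤ N - 1)
    (hw : ∀ s ∈ S, 0 < w s) (hSne : S.Nonempty)
    (B : ℕ) (hBS : B ∈ S) (hBmax : ∀ s ∈ S, s ≤ B)
    (k : ℕ) (hk : 1 ≤ k) (hkB : 2 * (k * B) < N)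
    (A : Matrix (Fin N) (Fin N) ℝ) (hA : A = circAdj N S w)
    (H : Matrix (Fin N) (Fin N) ℝ)
    (hH : H = (1 / 2 ^ k : ℝ) •
      ((1 : Matrix (Fin N) (Fin N) ℝ) - (∑ s ∈ S, 2 * w s)⁻¹ • A) ^ k)
    (p : Polynomial ℝ) (hp : p.natDegree ≤ 2 * k - 1)
    (x : Fin N → ℝ) (hx : ∀ j : Fin N, x j = p.eval ((j : ℕ) : ℝ))
    (i : Fin N) (hi1 : k * B ≤ (i : ℕ)) (hi2 : (i : ℕ) ≤ N - 1 - k * B) :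
    H.mulVec x i = 0 := by
  have hd : ∑ s ∈ S, 2 * w s ≠ 0 :=
    (Finset.sum_pos (fun s hs => mul_pos two_pos (hw s hs)) hSne).ne'
  have hdeg : p.degree < (2 * k : ℕ) :=
    (Polynomial.degree_lt_iff_coeff_zero p _).2 fun j hj =>
      Polynomial.coeff_eq_zero_of_natDegree_lt (by omega)
  subst hA hH
  rw [Matrix.smul_mulVec, Pi.smul_apply,
    highpass_pow_mulVec_apply (fun s hs => ⟨(hS s hs).1, hBmax s hs⟩) hx k i hi1 (by omega),
    polyHighpass_iterate_eq_zero hd k hdeg, Polynomial.eval_zero, smul_zero]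
end

section
/- Let A be the adjacency matrix of an undirected bipartite circulant graph on N vertices (N even, every element of S odd) with degree d per node, let W be the HGESWT filterbank matrix with parameters β_1,…,β_T, order k, and the alternating downsampling pattern K (K_{ii} = +1 for even i, K_{ii} = −1 for odd i). Then the set of eigenvalues of Wᵀ W equals the image of the set of eigenvalues of A/d under the map γ ↦ λ(γ) = (1/2)·( ∏_{n=1}^T (β_n+γ)^{2k}/2^{2k} + ∏_{n=1}^T (β_n−γ)^{2k}/2^{2k} ). In particular, if λ_min = min_γ λ(γ) > 0, the ℓ2 condition number of W equals C = √(λ_max/λ_min), where λ_max = max_γ λ(γ). -/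
open Polynomial

/-- The adjacency matrix of a circulant graph is symmetric. -/
theorem circAdj_transpose (N : ℕ) (S : Finset ℕ) (w : ℕ → ℝ) :
    (circAdj N S w).transpose = circAdj N S w := by
  ext i j
  simp only [Matrix.transpose_apply, circAdj]
  refine Finset.sum_congr rfl fun s _ => if_congr ?_ rfl rfl
  have neg_iff (a b : ℤ) : (-a) % (N : ℤ) = (-b) % N ↔ a % N = b % N :=
    Int.neg_modEq_neg (n := (N : ℤ))
  rw [← neg_sub (i : ℤ) (j : ℤ), neg_iff]
  nth_rewrite 1 [← neg_neg (s : ℤ)]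
  rw [neg_iff, or_comm]

/-- In a bipartite circulant graph, vertices of equal parity are not adjacent. -/
theorem circAdj_eq_zero_of_even_iff {N : ℕ} (hN : Even N) {S : Finset ℕ} (w : ℕ → ℝ)
    (hodd : ∀ s ∈ S, Odd s) {i j : Fin N} (hij : Even (i : ℕ) ↔ Even (j : ℕ)) :
    circAdj N S w i j = 0 := by
  refine Finset.sum_eq_zero fun s hs => if_neg ?_
  have key : ∀ t : ℤ, Odd t → ((i : ℤ) - (j : ℤ)) % (N : ℤ) ≠ t % (N : ℤ) := by
    intro t ht h
    have hdvd : (N : ℤ) ∣ t - ((i : ℤ) - j) := Int.ModEq.dvd h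
    have h2 : Even (t - ((i : ℤ) - j)) :=
      even_iff_two_dvd.2 ((even_iff_two_dvd.1 ((Int.even_coe_nat N).2 hN)).trans hdvd)
    have h3 : Even ((i : ℤ) - j) := by
      rw [Int.even_sub, Int.even_coe_nat, Int.even_coe_nat]
      exact hij
    rw [Int.even_sub] at h2
    exact Int.not_even_iff_odd.2 ht (h2.2 h3)
  have hs' : Odd (s : ℤ) := (Int.odd_coe_nat s).2 (hodd s hs)
  rintro (h | h)
  · exact key _ hs' h
  · exact key _ hs'.neg h

/-- The alternating sign matrix anticommutes with the adjacency matrix of a bipartite circulant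
graph. -/
theorem semiconjBy_diagonal_circAdj {N : ℕ} (hN : Even N) {S : Finset ℕ} (w : ℕ → ℝ)
    (hodd : ∀ s ∈ S, Odd s) :
    SemiconjBy (Matrix.diagonal (fun i : Fin N => if Even (i : ℕ) then (1 : ℝ) else -1))
      (circAdj N S w) (-circAdj N S w) := by
  ext i j
  rw [Matrix.diagonal_mul, Matrix.mul_diagonal, Matrix.neg_apply]
  by_cases hij : Even (i : ℕ) ↔ Even (j : ℕ)
  · simp [circAdj_eq_zero_of_even_iff hN w hodd hij]
  · by_cases hi : Even (i : ℕ) <;> by_cases hj : Even (j : ℕ) <;> simp_all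

theorem SemiconjBy.list_prod_map {ι M : Type*} [Monoid M] {a : M} {f g : ι → M}
    (h : ∀ i, SemiconjBy a (f i) (g i)) (l : List ι) :
    SemiconjBy a (l.map f).prod (l.map g).prod := by
  induction l with
  | nil => simp
  | cons i l ih => simpa using (h i).mul_right ih

/-- The spectral mapping theorem for polynomials in a real symmetric matrix. -/
theorem Matrix.IsHermitian.spectrum_aeval {n : Type*} [Fintype n] [DecidableEq n]
    {B : Matrix n n ℝ} (hB : B.IsHermitian) (p : ℝ[X]) :
    spectrum ℝ (aeval B p) = (fun x => p.eval x) '' spectrum ℝ B := by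
  rw [← cfc_polynomial p B hB.isSelfAdjoint]
  exact cfc_map_spectrum (fun x => p.eval x) B hB.isSelfAdjoint

/-- The `ℓ²` operator norm of a real matrix is its largest singular value. -/
theorem Matrix.norm_toEuclideanCLM_eq_sqrt {n : Type*} [Fintype n] [DecidableEq n]
    {M : Matrix n n ℝ} {c : ℝ} (hc : IsGreatest (spectrum ℝ (M.transpose * M)) c) :
    ‖Matrix.toEuclideanCLM (𝕜 := ℝ) M‖ = Real.sqrt c := by
  have hpsd : (M.transpose * M).PosSemidef := by
    simpa using Matrix.posSemidef_conjTranspose_mul_self M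
  have hc0 : 0 ≤ c := (Matrix.posSemidef_iff_isHermitian_and_spectrum_nonneg.1 hpsd).2 hc.1
  have hsq : ‖Matrix.toEuclideanCLM (𝕜 := ℝ) (M.transpose * M)‖
      = ‖Matrix.toEuclideanCLM (𝕜 := ℝ) M‖ * ‖Matrix.toEuclideanCLM (𝕜 := ℝ) M‖ := by
    rw [← CStarRing.norm_star_mul_self, ← map_star, ← map_mul, Matrix.star_eq_conjTranspose,
      Matrix.conjTranspose_eq_transpose_of_trivial]
  apply le_antisymm
  · refine ContinuousLinearMap.opNorm_le_bound _ (Real.sqrt_nonneg c) fun x => ?_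
    have hsub : (algebraMap ℝ (Matrix n n ℝ) c - M.transpose * M).PosSemidef := by
      refine Matrix.posSemidef_iff_isHermitian_and_spectrum_nonneg.2 ⟨?_, ?_⟩
      · refine Matrix.IsHermitian.sub ?_ hpsd.1
        rw [Algebra.algebraMap_eq_smul_one]
        simp [Matrix.IsHermitian]
      · rw [← spectrum.singleton_sub_eq]
        rintro _ ⟨_, rfl, y, hy, rfl⟩
        exact sub_nonneg.2 (hc.2 hy)
    have hx := hsub.dotProduct_mulVec_nonneg x.ofLp
    rw [Matrix.sub_mulVec, dotProduct_sub, Algebra.algebraMap_eq_smul_one, Matrix.smul_mulVec,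
      Matrix.one_mulVec, dotProduct_smul, ← Matrix.mulVec_mulVec, Matrix.dotProduct_mulVec,
      Matrix.vecMul_transpose] at hx
    refine le_of_sq_le_sq ?_ (by positivity)
    rw [mul_pow, Real.sq_sqrt hc0, EuclideanSpace.real_norm_sq_eq, EuclideanSpace.real_norm_sq_eq]
    simpa [dotProduct, ← sq] using hx
  · refine Real.sqrt_le_iff.2 ⟨norm_nonneg _, ?_⟩
    have hmem : c ∈ spectrum ℝ (Matrix.toEuclideanCLM (𝕜 := ℝ) (M.transpose * M)) := by
      rw [AlgEquiv.spectrum_eq]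
      exact hc.1
    have h := spectrum.norm_le_norm_mul_of_mem hmem
    rw [sq, ← hsq]
    calc c ≤ ‖c‖ := Real.le_norm_self c
      _ ≤ _ := h
      _ ≤ _ := mul_le_of_le_one_right (norm_nonneg _) ContinuousLinearMap.norm_id_le

/-- The `ℓ²` condition number of a real matrix is the ratio of its extreme singular values. -/
theorem Matrix.norm_mul_norm_inv_eq_sqrt {n : Type*} [Fintype n] [DecidableEq n]
    {M : Matrix n n ℝ} {a b : ℝ} (ha : IsLeast (spectrum ℝ (M.transpose * M)) a)
    (hb : IsGreatest (spectrum ℝ (M.transpose * M)) b) (ha0 : 0 < a) :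
    ‖Matrix.toEuclideanCLM (𝕜 := ℝ) M‖ * ‖Matrix.toEuclideanCLM (𝕜 := ℝ) M⁻¹‖ =
      Real.sqrt (b / a) := by
  have hunit : IsUnit (M.transpose * M) :=
    spectrum.isUnit_of_zero_notMem ℝ fun h => (ha.2 h).not_gt ha0
  have hM : IsUnit M := by
    rw [Matrix.isUnit_iff_isUnit_det, Matrix.det_mul] at hunit
    exact (Matrix.isUnit_iff_isUnit_det M).2 (isUnit_of_mul_isUnit_right hunit)
  have hMt : IsUnit M.transpose := by
    rw [Matrix.isUnit_iff_isUnit_det, Matrix.det_transpose, ← Matrix.isUnit_iff_isUnit_det]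
    exact hM
  obtain ⟨u, rfl⟩ := hM
  obtain ⟨v, hv⟩ := hMt
  have hspec : spectrum ℝ ((u : Matrix n n ℝ)⁻¹.transpose * (u : Matrix n n ℝ)⁻¹)
      = (spectrum ℝ ((u : Matrix n n ℝ).transpose * (u : Matrix n n ℝ)))⁻¹ := by
    have h1 : (u : Matrix n n ℝ)⁻¹.transpose * (u : Matrix n n ℝ)⁻¹
        = (((u * v)⁻¹ : (Matrix n n ℝ)ˣ) : Matrix n n ℝ) := by
      rw [Matrix.transpose_nonsing_inv, ← hv, _root_.mul_inv_rev, Units.val_mul, Matrix.coe_units_inv,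
        Matrix.coe_units_inv]
    rw [h1, ← spectrum.map_inv, ← hv, ← Units.val_mul,
      ← spectrum.units_conjugate (a := ((v * u : (Matrix n n ℝ)ˣ) : Matrix n n ℝ)) (u := u),
      ← Units.val_mul, ← Units.val_mul]
    simp [mul_assoc]
  have hinv : IsGreatest
      (spectrum ℝ ((u : Matrix n n ℝ)⁻¹.transpose * (u : Matrix n n ℝ)⁻¹)) a⁻¹ := by
    rw [hspec]
    refine ⟨by simpa using ha.1, fun y hy => ?_⟩
    have hay : a ≤ y⁻¹ := ha.2 hy
    simpa using inv_anti₀ ha0 hay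
  rw [Matrix.norm_toEuclideanCLM_eq_sqrt hb, Matrix.norm_toEuclideanCLM_eq_sqrt hinv,
    ← Real.sqrt_mul' _ (inv_nonneg.2 ha0.le), div_eq_mul_inv]

/-- If `K` is a symmetric involution intertwining commuting symmetric matrices `P` and `Q`, the
Gram matrix of the filterbank built from `K`, `P`, `Q` is the average of `P²` and `Q²`. -/
theorem filterbank_transpose_mul_self {n : Type*} [Fintype n] [DecidableEq n]
    {K P Q : Matrix n n ℝ} (hKt : K.transpose = K) (hK : K * K = 1)
    (hPt : P.transpose = P) (hQt : Q.transpose = Q) (hPQ : Commute P Q)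
    (hKP : SemiconjBy K P Q) (hKQ : SemiconjBy K Q P) :
    ((1 / 2 : ℝ) • ((1 + K) * P) + (1 / 2 : ℝ) • ((1 - K) * Q)).transpose *
      ((1 / 2 : ℝ) • ((1 + K) * P) + (1 / 2 : ℝ) • ((1 - K) * Q)) =
      (1 / 2 : ℝ) • (P ^ 2 + Q ^ 2) := by
  have hpp : (1 + K) * (1 + K) = (2 : ℝ) • (1 + K) := by
    rw [add_mul, mul_add, mul_add, hK, two_smul]
    simp only [mul_one, one_mul]
    abel
  have hmm : (1 - K) * (1 - K) = (2 : ℝ) • (1 - K) := by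
    rw [sub_mul, mul_sub, mul_sub, hK, two_smul]
    simp only [mul_one, one_mul]
    abel
  have hpm : (1 + K) * (1 - K) = 0 := by
    rw [add_mul, mul_sub, mul_sub, hK]
    simp
  have hmp : (1 - K) * (1 + K) = 0 := by
    rw [sub_mul, mul_add, mul_add, hK]
    simp [add_comm]
  have hcross : P * (K * P) = Q * (K * Q) := by
    rw [hKP.eq, hKQ.eq, ← mul_assoc, ← mul_assoc, hPQ.eq]
  have hT : ((1 / 2 : ℝ) • ((1 + K) * P) + (1 / 2 : ℝ) • ((1 - K) * Q)).transpose =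
      (1 / 2 : ℝ) • (P * (1 + K)) + (1 / 2 : ℝ) • (Q * (1 - K)) := by
    simp [Matrix.transpose_mul, hKt, hPt, hQt]
  have hsandwich (X Y U V : Matrix n n ℝ) : X * U * (V * Y) = X * (U * V) * Y := by
    simp only [mul_assoc]
  rw [hT, add_mul, mul_add (_ • _), mul_add (_ • _), smul_mul_smul_comm, smul_mul_smul_comm, smul_mul_smul_comm,
    smul_mul_smul_comm, hsandwich, hsandwich, hsandwich, hsandwich, hpp, hmm, hpm, hmp]
  simp only [mul_zero, zero_mul, smul_zero, add_zero, zero_add, mul_smul_comm, smul_mul_assoc,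
    smul_smul]
  rw [mul_add, mul_sub, add_mul, sub_mul, mul_assoc P K P, mul_assoc Q K Q, hcross]
  simp only [mul_one, sq]
  module

/-- for a bipartite circulant graph with alternating downsampling, the
eigenvalues of `Wᵀ W` are the image of the eigenvalues of `A/d` under
`γ ↦ (1/2)(∏_n (β_n+γ)^{2k}/2^{2k} + ∏_n (β_n−γ)^{2k}/2^{2k})`; in particular if
`λ_min > 0` the ℓ2 condition number of `W` equals `√(λ_max/λ_min)`. -/
theorem hgeswt_bipartite_condition_number
    (N : ℕ) (hNe : Even N) (S : Finset ℕ) (w : ℕ → ℝ)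
    (hS : ∀ s ∈ S, 1 ≤ s ∧ 2 * s ≤ N - 1)
    (hw : ∀ s ∈ S, 0 < w s)
    (hodd : ∀ s ∈ S, Odd s)
    (T : ℕ) (α : Fin T → ℝ)
    (β : Fin T → ℝ)
    (hβ : ∀ n : Fin T, β n =
      (∑ s ∈ S, 2 * w s * Real.cos (α n * s)) / (∑ s ∈ S, 2 * w s))
    (k : ℕ) (hk : 1 ≤ k)
    (A : Matrix (Fin N) (Fin N) ℝ) (hA : A = circAdj N S w)
    (HLP HHP : Matrix (Fin N) (Fin N) ℝ)
    (hHLP : HLP = ((List.finRange T).map (fun n =>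
      (1 / 2 ^ k : ℝ) • (β n • (1 : Matrix (Fin N) (Fin N) ℝ)
        + (∑ s ∈ S, 2 * w s)⁻¹ • A) ^ k)).prod)
    (hHHP : HHP = ((List.finRange T).map (fun n =>
      (1 / 2 ^ k : ℝ) • (β n • (1 : Matrix (Fin N) (Fin N) ℝ)
        - (∑ s ∈ S, 2 * w s)⁻¹ • A) ^ k)).prod)
    (K : Matrix (Fin N) (Fin N) ℝ)
    (hK : K = Matrix.diagonal (fun i : Fin N => if Even (i : ℕ) then (1 : ℝ) else -1))
    (W : Matrix (Fin N) (Fin N) ℝ)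
    (hW : W = (1 / 2 : ℝ) • ((1 + K) * HLP) + (1 / 2 : ℝ) • ((1 - K) * HHP))
    (lam : ℝ → ℝ)
    (hlam : ∀ γ : ℝ, lam γ = (1 / 2) *
      (∏ n : Fin T, (β n + γ) ^ (2 * k) / 2 ^ (2 * k) +
       ∏ n : Fin T, (β n - γ) ^ (2 * k) / 2 ^ (2 * k))) :
    spectrum ℝ (W.transpose * W) =
      lam '' spectrum ℝ ((∑ s ∈ S, 2 * w s)⁻¹ • A) ∧
    ∀ lmin lmax : ℝ,
      IsLeast (lam '' spectrum ℝ ((∑ s ∈ S, 2 * w s)⁻¹ • A)) lmin →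
      IsGreatest (lam '' spectrum ℝ ((∑ s ∈ S, 2 * w s)⁻¹ • A)) lmax →
      0 < lmin →
      ‖Matrix.toEuclideanCLM (𝕜 := ℝ) W‖ * ‖Matrix.toEuclideanCLM (𝕜 := ℝ) W⁻¹‖ =
        Real.sqrt (lmax / lmin) := by
  set d : ℝ := ∑ s ∈ S, 2 * w s
  set B : Matrix (Fin N) (Fin N) ℝ := d⁻¹ • A with hBdef
  have hB : B.IsHermitian := by
    rw [Matrix.IsHermitian, Matrix.conjTranspose_eq_transpose_of_trivial, hBdef,
      Matrix.transpose_smul, hA, circAdj_transpose]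
  have hKB : SemiconjBy K B (-B) := by
    have h := semiconjBy_diagonal_circAdj hNe w hodd
    rw [← hA, ← hK] at h
    rw [SemiconjBy, hBdef, mul_smul_comm, h.eq, ← smul_neg, smul_mul_assoc]
  have hKt : K.transpose = K := by rw [hK, Matrix.diagonal_transpose]
  have hKK : K * K = 1 := by
    rw [hK, Matrix.diagonal_mul_diagonal, ← Matrix.diagonal_one]
    congr 1
    ext i
    split_ifs <;> norm_num
  have hKone (r : ℝ) : SemiconjBy K (r • 1) (r • 1) := by
    rw [SemiconjBy, mul_smul_comm, smul_mul_assoc, one_mul, mul_one]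
  have hKsmul (r : ℝ) {X Y : Matrix (Fin N) (Fin N) ℝ} (h : SemiconjBy K X Y) :
      SemiconjBy K (r • X) (r • Y) := by
    rw [SemiconjBy, mul_smul_comm, smul_mul_assoc, h.eq]
  have hKP : SemiconjBy K HLP HHP := by
    rw [hHLP, hHHP]
    refine SemiconjBy.list_prod_map (fun n => hKsmul _ (SemiconjBy.pow_right ?_ k)) _
    rw [sub_eq_add_neg]
    exact (hKone _).add_right hKB
  have hKQ : SemiconjBy K HHP HLP := by
    rw [hHLP, hHHP]
    refine SemiconjBy.list_prod_map (fun n => hKsmul _ (SemiconjBy.pow_right ?_ k)) _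
    rw [sub_eq_add_neg]
    simpa using (hKone _).add_right hKB.neg_right
  set p : ℝ[X] := ∏ n : Fin T, (1 / 2 ^ k : ℝ) • (C (β n) + X) ^ k with hp
  set q : ℝ[X] := ∏ n : Fin T, (1 / 2 ^ k : ℝ) • (C (β n) - X) ^ k with hq
  have hPp : HLP = aeval B p := by
    rw [hHLP, hp, ← List.prod_ofFn, List.ofFn_eq_map, map_list_prod, List.map_map]
    simp [Function.comp_def, Algebra.algebraMap_eq_smul_one]
  have hQq : HHP = aeval B q := by
    rw [hHHP, hq, ← List.prod_ofFn, List.ofFn_eq_map, map_list_prod, List.map_map]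
    simp [Function.comp_def, Algebra.algebraMap_eq_smul_one]
  have haevalT (f : ℝ[X]) : (aeval B f).transpose = aeval B f := by
    rw [← cfc_polynomial f B hB.isSelfAdjoint, ← Matrix.conjTranspose_eq_transpose_of_trivial]
    exact (cfc_predicate (fun x => f.eval x) B).star_eq
  have hgram : W.transpose * W = aeval B ((1 / 2 : ℝ) • (p ^ 2 + q ^ 2)) := by
    rw [hW, filterbank_transpose_mul_self hKt hKK (by rw [hPp, haevalT]) (by rw [hQq, haevalT])
      (by rw [hPp, hQq]; exact (Commute.all p q).map (aeval B)) hKP hKQ, hPp, hQq]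
    simp
  have heval : (fun x => ((1 / 2 : ℝ) • (p ^ 2 + q ^ 2)).eval x) = lam := by
    funext x
    simp only [hlam, hp, hq, eval_smul, eval_add, eval_pow, eval_prod, eval_sub, eval_C, eval_X,
      smul_eq_mul, ← Finset.prod_pow]
    congr 2 <;> exact Finset.prod_congr rfl fun n _ => by rw [mul_pow]; ring
  have hspec : spectrum ℝ (W.transpose * W) = lam '' spectrum ℝ B := by
    rw [hgram, hB.spectrum_aeval, heval]
  refine ⟨hspec, fun lmin lmax hmin hmax hpos => ?_⟩
  rw [← hspec] at hmin hmax
  exact Matrix.norm_mul_norm_inv_eq_sqrt hmin hmax hpos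
end

section
/- Let A be the adjacency matrix of an undirected circulant graph on N vertices (N even) with degree d per node, and let γ_l = d̃_{2πl/N}/d (l = 0,…,N−1) denote the DFT-ordered eigenvalues of A/d. Let W = (1/2)(I+K)H_LP + (1/2)(I−K)H_HP be the HGESWT filterbank matrix with parameters β_1,…,β_T, order k, and the alternating downsampling pattern K (K_{ii} = +1 for even i, K_{ii} = −1 for odd i). Suppose there exist parameter indices i, j ∈ {1,…,T} and frequency indices p, q ∈ {0,…,N−1} with q ≡ p + N/2 (mod N) such that β_i = γ_p and β_j = γ_q. Then W is not invertible. -/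
open Matrix

lemma sum_ite_circulant {N : ℕ} (hN : 1 ≤ N) (f : ℤ → ℝ) (hf : Function.Periodic f (N : ℤ))
    (a : Fin N) (t : ℤ) :
    ∑ b : Fin N, (if ((a : ℤ) - (b : ℤ)) % (N : ℤ) = t % (N : ℤ) then f b else 0)
      = f (a - t) := by
  have hN' : (0 : ℤ) < N := by exact_mod_cast hN
  have h0 := Int.emod_nonneg ((a : ℤ) - t) hN'.ne'
  have h1 := Int.emod_lt_of_pos ((a : ℤ) - t) hN'
  have hmod : f (((a : ℤ) - t) % N) = f (a - t) := by
    rw [Int.emod_def, mul_comm]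
    exact hf.sub_int_mul_eq _
  rw [Finset.sum_eq_single (⟨(((a : ℤ) - t) % N).toNat, by omega⟩ : Fin N)]
  · simp only [Int.toNat_of_nonneg h0, hmod]
    rw [if_pos]
    rw [Int.sub_emod_emod, sub_sub_cancel]
  · intro b _ hb
    rw [if_neg]
    intro h
    apply hb
    ext
    have h2 : ((a : ℤ) - t) % N = (b : ℤ) % N := by
      have := Int.ModEq.sub (Int.ModEq.refl (a : ℤ)) (show _ ≡ _ [ZMOD N] from h)
      rw [sub_sub_cancel] at this
      exact this.symm
    rw [Int.emod_eq_of_lt (a := (b : ℤ)) (by omega) (by omega)] at h2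
    simp [h2]
  · simp

lemma circAdj_mulVec {N : ℕ} (hN : 1 ≤ N) (S : Finset ℕ) (w : ℕ → ℝ)
    (hS : ∀ s ∈ S, 1 ≤ s ∧ 2 * s ≤ N - 1)
    (f : ℤ → ℝ) (hf : Function.Periodic f (N : ℤ)) (a : Fin N) :
    (circAdj N S w *ᵥ fun b : Fin N => f b) a
      = ∑ s ∈ S, w s * (f (a - s) + f (a + s)) := by
  simp only [mulVec, dotProduct, circAdj, Finset.sum_mul]
  rw [Finset.sum_comm]
  refine Finset.sum_congr rfl fun s hs => ?_
  have hs' := hS s hs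
  rw [← sub_neg_eq_add (a : ℤ), ← sum_ite_circulant hN f hf a s,
    ← sum_ite_circulant hN f hf a (-s), ← Finset.sum_add_distrib, Finset.mul_sum]
  refine Finset.sum_congr rfl fun b _ => ?_
  have hne : (s : ℤ) % N ≠ (-s : ℤ) % N := by
    intro h
    have h2 : (N : ℤ) ∣ s - -s := Int.ModEq.dvd (show (-s : ℤ) ≡ s [ZMOD N] from h.symm)
    have := Int.le_of_dvd (by omega) h2
    omega
  by_cases h1 : ((a : ℤ) - b) % N = (s : ℤ) % N
  · simp [h1, hne]
  · simp [h1]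

/-- Sampled cosines whose frequency is a multiple of `2π / N` are eigenvectors of `circAdj`. -/
lemma circAdj_mulVec_cos {N : ℕ} (hN : 1 ≤ N) (S : Finset ℕ) (w : ℕ → ℝ)
    (hS : ∀ s ∈ S, 1 ≤ s ∧ 2 * s ≤ N - 1)
    (θ φ : ℝ) (m : ℤ) (hθ : θ * N = m * (2 * Real.pi)) :
    (circAdj N S w *ᵥ fun b : Fin N => Real.cos (θ * (b : ℕ) + φ))
      = (∑ s ∈ S, 2 * w s * Real.cos (θ * s)) •
        fun b : Fin N => Real.cos (θ * (b : ℕ) + φ) := by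
  ext a
  have hf : Function.Periodic (fun x : ℤ => Real.cos (θ * x + φ)) (N : ℤ) := by
    intro x
    have : θ * ((x + (N : ℤ) : ℤ) : ℝ) + φ = (θ * x + φ) + m * (2 * Real.pi) := by
      push_cast
      linear_combination hθ
    simp only [this, Real.cos_add_int_mul_two_pi]
  have h := circAdj_mulVec hN S w hS _ hf a
  simp only [Int.cast_natCast] at h
  rw [h, Pi.smul_apply, smul_eq_mul, Finset.sum_mul]
  refine Finset.sum_congr rfl fun s _ => ?_
  push_cast
  rw [show θ * ((a : ℕ) - (s : ℝ)) + φ = (θ * (a : ℕ) + φ) - θ * s by ring,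
    show θ * ((a : ℕ) + (s : ℝ)) + φ = (θ * (a : ℕ) + φ) + θ * s by ring,
    Real.cos_sub, Real.cos_add (θ * (a : ℕ) + φ) (θ * s)]
  ring

section Eigenvectors

variable {n ι R : Type*} [Fintype n] [DecidableEq n] [CommRing R]

lemma pow_mulVec_of_mulVec_eq_smul {M : Matrix n n R} {v : n → R} {μ : R}
    (h : M *ᵥ v = μ • v) (k : ℕ) : (M ^ k) *ᵥ v = μ ^ k • v := by
  induction k with
  | zero => simp
  | succ k ih => rw [pow_succ, ← mulVec_mulVec, h, mulVec_smul, ih, smul_smul, pow_succ']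

lemma list_prod_mulVec_of_mulVec_eq_smul {M : ι → Matrix n n R} {v : n → R} {μ : ι → R}
    (h : ∀ t, M t *ᵥ v = μ t • v) (l : List ι) :
    (l.map M).prod *ᵥ v = (l.map μ).prod • v := by
  induction l with
  | nil => simp
  | cons t l ih =>
    rw [List.map_cons, List.prod_cons, ← mulVec_mulVec, ih, mulVec_smul, h, smul_smul,
      List.map_cons, List.prod_cons, mul_comm]

lemma list_prod_smul_add_pow_mulVec {B : Matrix n n R} {v : n → R} {γ : R}
    (h : B *ᵥ v = γ • v) (c : R) (β : ι → R) (k : ℕ) (l : List ι) :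
    (l.map fun t => c • (β t • (1 : Matrix n n R) + B) ^ k).prod *ᵥ v
      = (l.map fun t => c * (β t + γ) ^ k).prod • v := by
  refine list_prod_mulVec_of_mulVec_eq_smul (fun t => ?_) l
  rw [smul_mulVec, pow_mulVec_of_mulVec_eq_smul (μ := β t + γ), smul_smul]
  rw [add_mulVec, smul_mulVec, one_mulVec, h, add_smul]

lemma list_prod_smul_sub_pow_mulVec_eq_zero {B : Matrix n n R} {v : n → R} {γ : R}
    (h : B *ᵥ v = γ • v) (c : R) (β : ι → R) {k : ℕ} (hk : 1 ≤ k) {l : List ι}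
    {i : ι} (hi : i ∈ l) (hβ : β i = γ) :
    (l.map fun t => c • (β t • (1 : Matrix n n R) - B) ^ k).prod *ᵥ v = 0 := by
  have hB : (-B) *ᵥ v = (-γ) • v := by rw [neg_mulVec, h, neg_smul]
  simp only [sub_eq_add_neg]
  rw [list_prod_smul_add_pow_mulVec hB, List.prod_eq_zero, zero_smul]
  exact List.mem_map.2 ⟨i, hi, by rw [hβ, add_neg_cancel, zero_pow (by omega), mul_zero]⟩

end Eigenvectors

/-- if two HGESWT parameters coincide with DFT-ordered eigenvalues of `A/d`
at frequency positions `p` and `q ≡ p + N/2 (mod N)`, then the filterbank with the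
alternating downsampling pattern is not invertible. -/
theorem hgeswt_spectral_folding_not_invertible
    (N : ℕ) (hNe : Even N) (hN : 1 ≤ N) (S : Finset ℕ) (w : ℕ → ℝ)
    (hS : ∀ s ∈ S, 1 ≤ s ∧ 2 * s ≤ N - 1)
    (hw : ∀ s ∈ S, 0 < w s) (hSne : S.Nonempty)
    (A : Matrix (Fin N) (Fin N) ℝ) (hA : A = circAdj N S w)
    (γ : ℕ → ℝ)
    (hγ : ∀ l : ℕ, γ l =
      (∑ s ∈ S, 2 * w s * Real.cos (2 * Real.pi * l * s / N)) / (∑ s ∈ S, 2 * w s))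
    (T : ℕ) (α : Fin T → ℝ)
    (β : Fin T → ℝ)
    (hβ : ∀ n : Fin T, β n =
      (∑ s ∈ S, 2 * w s * Real.cos (α n * s)) / (∑ s ∈ S, 2 * w s))
    (i j : Fin T) (p q : ℕ) (hp : p < N) (hq : q < N)
    (hpq : q ≡ p + N / 2 [MOD N])
    (hbi : β i = γ p) (hbj : β j = γ q)
    (k : ℕ) (hk : 1 ≤ k)
    (HLP HHP : Matrix (Fin N) (Fin N) ℝ)
    (hHLP : HLP = ((List.finRange T).map (fun n =>
      (1 / 2 ^ k : ℝ) • (β n • (1 : Matrix (Fin N) (Fin N) ℝ)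
        + (∑ s ∈ S, 2 * w s)⁻¹ • A) ^ k)).prod)
    (hHHP : HHP = ((List.finRange T).map (fun n =>
      (1 / 2 ^ k : ℝ) • (β n • (1 : Matrix (Fin N) (Fin N) ℝ)
        - (∑ s ∈ S, 2 * w s)⁻¹ • A) ^ k)).prod)
    (K : Matrix (Fin N) (Fin N) ℝ)
    (hK : K = Matrix.diagonal (fun a : Fin N => if Even (a : ℕ) then (1 : ℝ) else -1))
    (W : Matrix (Fin N) (Fin N) ℝ)
    (hW : W = (1 / 2 : ℝ) • ((1 + K) * HLP) + (1 / 2 : ℝ) • ((1 - K) * HHP)) :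
    ¬ IsUnit W := by
  intro hU
  have hN2 : 2 ≤ N := by
    obtain ⟨r, hr⟩ := hNe
    omega
  have hNr : (N : ℝ) ≠ 0 := by positivity
  have hinj : ∀ v, W *ᵥ v = 0 → v = 0 := fun v hv =>
    mulVec_injective_of_isUnit hU (hv.trans (mulVec_zero W).symm)
  set θ : ℝ := 2 * Real.pi * p / N with hθ
  set D : ℝ := ∑ s ∈ S, 2 * w s
  have hθN : θ * N = (p : ℤ) * (2 * Real.pi) := by
    rw [hθ]
    push_cast
    field_simp
  have hhalf : ((N / 2 : ℕ) : ℝ) * 2 = N := by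
    exact_mod_cast Nat.div_mul_cancel hNe.two_dvd
  have hθN' : (θ + Real.pi) * N = (((p + N / 2 : ℕ) : ℤ) : ℝ) * (2 * Real.pi) := by
    rw [add_mul, hθN, Int.cast_natCast, Int.cast_natCast, Nat.cast_add]
    linear_combination -Real.pi * hhalf
  have hγp : γ p = (∑ s ∈ S, 2 * w s * Real.cos (θ * s)) / D := by
    rw [hγ]
    refine congrArg (· / D) (Finset.sum_congr rfl fun s _ => ?_)
    rw [hθ]
    congr 2
    ring
  have hγq : γ q = (∑ s ∈ S, 2 * w s * Real.cos ((θ + Real.pi) * s)) / D := by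
    rw [hγ]
    refine congrArg (· / D) (Finset.sum_congr rfl fun s _ => ?_)
    obtain ⟨t, ht⟩ := (Nat.modEq_iff_dvd.1 hpq)
    have ht' : (p : ℝ) + (N / 2 : ℕ) - q = N * t := by exact_mod_cast ht
    have : (θ + Real.pi) * s
        = 2 * Real.pi * q * s / N + ((t * s : ℤ) : ℝ) * (2 * Real.pi) := by
      rw [hθ]
      push_cast
      field_simp
      linear_combination 2 * (s : ℝ) * ht' - s * hhalf
    rw [this, Real.cos_add_int_mul_two_pi]
  let v : ℝ → Fin N → ℝ := fun φ b => Real.cos (θ * (b : ℕ) + φ)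
  let u : ℝ → Fin N → ℝ := fun φ b => Real.cos ((θ + Real.pi) * (b : ℕ) + φ)
  have hu : ∀ φ (b : Fin N), u φ b = (-1) ^ (b : ℕ) * v φ b := fun φ b => by
    simp only [u, v]
    rw [← Real.cos_add_nat_mul_pi]
    congr 1
    ring
  have hsign : ∀ b : Fin N, (if Even (b : ℕ) then (1 : ℝ) else -1) = (-1) ^ (b : ℕ) :=
    fun b => neg_one_pow_eq_ite.symm
  have hKv : ∀ φ, K *ᵥ v φ = u φ := fun φ => by
    ext b
    rw [hK, mulVec_diagonal, hsign, hu]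
  have hKu : ∀ φ, K *ᵥ u φ = v φ := fun φ => by
    ext b
    rw [hK, mulVec_diagonal, hsign, hu, ← mul_assoc, ← mul_pow]
    simp
  have hAv : ∀ φ, (D⁻¹ • A) *ᵥ v φ = γ p • v φ := fun φ => by
    rw [smul_mulVec, hA, circAdj_mulVec_cos hN S w hS θ φ _ hθN, smul_smul, hγp,
      div_eq_inv_mul]
  have hAu : ∀ φ, (D⁻¹ • A) *ᵥ u φ = γ q • u φ := fun φ => by
    rw [smul_mulVec, hA, circAdj_mulVec_cos hN S w hS (θ + Real.pi) φ _ hθN', smul_smul, hγq,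
      div_eq_inv_mul]
  obtain ⟨x, hx⟩ : ∃ x : ℝ, ∀ φ, HLP *ᵥ v φ = x • v φ :=
    ⟨_, fun φ => hHLP ▸ list_prod_smul_add_pow_mulVec (hAv φ) _ β k _⟩
  obtain ⟨y, hy⟩ : ∃ y : ℝ, ∀ φ, HLP *ᵥ u φ = y • u φ :=
    ⟨_, fun φ => hHLP ▸ list_prod_smul_add_pow_mulVec (hAu φ) _ β k _⟩
  have hHv : ∀ φ, HHP *ᵥ v φ = 0 := fun φ =>
    hHHP ▸ list_prod_smul_sub_pow_mulVec_eq_zero (hAv φ) _ β hk (List.mem_finRange i) hbi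
  have hHu : ∀ φ, HHP *ᵥ u φ = 0 := fun φ =>
    hHHP ▸ list_prod_smul_sub_pow_mulVec_eq_zero (hAu φ) _ β hk (List.mem_finRange j) hbj
  have hWv : ∀ φ, W *ᵥ v φ = (x / 2) • (v φ + u φ) := fun φ => by
    rw [hW, add_mulVec, smul_mulVec, smul_mulVec, ← mulVec_mulVec, ← mulVec_mulVec, hx, hHv,
      mulVec_zero, smul_zero, add_zero, mulVec_smul, add_mulVec, one_mulVec, hKv, smul_smul]
    ring_nf
  have hWu : ∀ φ, W *ᵥ u φ = (y / 2) • (v φ + u φ) := fun φ => by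
    rw [hW, add_mulVec, smul_mulVec, smul_mulVec, ← mulVec_mulVec, ← mulVec_mulVec, hy, hHu,
      mulVec_zero, smul_zero, add_zero, mulVec_smul, add_mulVec, one_mulVec, hKu, smul_smul,
      add_comm (u φ)]
    ring_nf
  have hker : ∀ φ, y • v φ - x • u φ = 0 := fun φ => hinj _ <| by
    rw [mulVec_sub, mulVec_smul, mulVec_smul, hWv, hWu, smul_smul, smul_smul, ← sub_smul]
    ring_nf
    simp
  have h0 := congrFun (hker 0) ⟨0, by omega⟩
  have h1 := congrFun (hker (-θ)) ⟨1, by omega⟩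
  simp only [Pi.sub_apply, Pi.smul_apply, hu, smul_eq_mul, Pi.zero_apply] at h0 h1
  simp only [v] at h0 h1
  norm_num at h0 h1
  have hx0 : x = 0 := by linarith
  have hv0 := congrFun (hinj (v 0) (by rw [hWv, hx0]; simp)) ⟨0, by omega⟩
  simp [v] at hv0
end
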